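/- CVaR_δ is a coherent risk measure: it satisfies monotonicity, translation invariance, positive homogeneity, and subadditivity (equivalently, convexity) on the space of integrable random variables. -/

import Mathlib

open MeasureTheory Set

/-- `CVaR_δ(X) = min_α [α + (1/(1-δ)) E[(X-α)⁺]]` (Rockafellar–Uryasev form). -/
noncomputable def CVaR {Ω : Type*} [MeasurableSpace Ω] (P : Measure Ω) (δ : ℝ)
    (X : Ω → ℝ) : ℝ :=
  ⨅ α : ℝ, (α + (1 - δ)⁻¹ * ∫ ω, max (X ω - α) 0 ∂P)

section CVaR

variable {Ω : Type*} [MeasurableSpace Ω] {P : Measure Ω} [IsProbabilityMeasure P] {δ : ℝ}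
  {X Y : Ω → ℝ}

theorem integrable_max_sub_const (hX : Integrable X P) (α : ℝ) :
    Integrable (fun ω => max (X ω - α) 0) P :=
  (hX.sub (integrable_const α)).pos_part

theorem integral_le_CVaR_objective (hδ : δ ∈ Set.Ioo (0 : ℝ) 1) (hX : Integrable X P) (α : ℝ) :
    ∫ ω, X ω ∂P ≤ α + (1 - δ)⁻¹ * ∫ ω, max (X ω - α) 0 ∂P := by
  have hexcess : ∫ ω, (X ω - α) ∂P ≤ ∫ ω, max (X ω - α) 0 ∂P :=
    integral_mono (hX.sub (integrable_const α)) (integrable_max_sub_const hX α)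
      fun ω => le_max_left _ _
  have hnonneg : 0 ≤ ∫ ω, max (X ω - α) 0 ∂P := integral_nonneg fun ω => le_max_right _ _
  have hone : 1 ≤ (1 - δ)⁻¹ := (one_le_inv₀ (by linarith [hδ.2])).2 (by linarith [hδ.1])
  rw [integral_sub hX (integrable_const α)] at hexcess
  simp only [integral_const, probReal_univ, one_smul] at hexcess
  nlinarith

theorem bddBelow_range_CVaR_objective (hδ : δ ∈ Set.Ioo (0 : ℝ) 1) (hX : Integrable X P) :
    BddBelow (Set.range fun α : ℝ => α + (1 - δ)⁻¹ * ∫ ω, max (X ω - α) 0 ∂P) :=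
  ⟨∫ ω, X ω ∂P, Set.forall_mem_range.2 (integral_le_CVaR_objective hδ hX)⟩

theorem CVaR_le_objective (hδ : δ ∈ Set.Ioo (0 : ℝ) 1) (hX : Integrable X P) (α : ℝ) :
    CVaR P δ X ≤ α + (1 - δ)⁻¹ * ∫ ω, max (X ω - α) 0 ∂P :=
  ciInf_le (bddBelow_range_CVaR_objective hδ hX) α

theorem CVaR_mono (hδ : δ ∈ Set.Ioo (0 : ℝ) 1) (hX : Integrable X P) (hY : Integrable Y P)
    (hYX : ∀ᵐ ω ∂P, Y ω ≤ X ω) : CVaR P δ Y ≤ CVaR P δ X := by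
  refine ciInf_mono (bddBelow_range_CVaR_objective hδ hY) fun α => ?_
  have hδ' : 0 ≤ (1 - δ)⁻¹ := inv_nonneg.2 (by linarith [hδ.2])
  gcongr α + _ * ?_
  refine integral_mono_ae (integrable_max_sub_const hY α) (integrable_max_sub_const hX α) ?_
  filter_upwards [hYX] with ω hω
  gcongr

theorem CVaR_add_const (hδ : δ ∈ Set.Ioo (0 : ℝ) 1) (hX : Integrable X P) (c : ℝ) :
    CVaR P δ (fun ω => X ω + c) = CVaR P δ X + c := by
  unfold CVaR
  rw [ciInf_add (bddBelow_range_CVaR_objective hδ hX)]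
  refine ((Equiv.addRight c).iInf_congr fun α => ?_).symm
  simp only [Equiv.coe_addRight, add_sub_add_right_eq_sub]
  ring

theorem CVaR_zero (hδ : δ ∈ Set.Ioo (0 : ℝ) 1) : CVaR P δ (fun _ => 0) = 0 := by
  have h0 : Integrable (fun _ : Ω => (0 : ℝ)) P := integrable_const 0
  apply le_antisymm
  · simpa using CVaR_le_objective hδ h0 0
  · exact le_ciInf fun α => by simpa using integral_le_CVaR_objective hδ h0 α

theorem CVaR_const_mul (hδ : δ ∈ Set.Ioo (0 : ℝ) 1) (X : Ω → ℝ) {l : ℝ} (hl : 0 ≤ l) :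
    CVaR P δ (fun ω => l * X ω) = l * CVaR P δ X := by
  obtain rfl | hpos := hl.eq_or_lt
  · simpa using CVaR_zero hδ
  unfold CVaR
  rw [Real.mul_iInf_of_nonneg hl]
  refine ((Equiv.mulLeft₀ l hpos.ne').iInf_congr fun α => ?_).symm
  have hmax (ω : Ω) : max (l * X ω - l * α) 0 = l * max (X ω - α) 0 := by
    rw [mul_max_of_nonneg _ _ hl, mul_sub, mul_zero]
  simp only [Equiv.mulLeft₀_apply, hmax, integral_const_mul]
  ring

theorem CVaR_add_le (hδ : δ ∈ Set.Ioo (0 : ℝ) 1) (hX : Integrable X P) (hY : Integrable Y P) :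
    CVaR P δ (fun ω => X ω + Y ω) ≤ CVaR P δ X + CVaR P δ Y := by
  refine le_ciInf_add_ciInf fun α β => ?_
  have hXY : Integrable (fun ω => X ω + Y ω) P := hX.add hY
  refine (CVaR_le_objective hδ hXY (α + β)).trans ?_
  have hδ' : 0 ≤ (1 - δ)⁻¹ := inv_nonneg.2 (by linarith [hδ.2])
  have hX' := integrable_max_sub_const hX α
  have hY' := integrable_max_sub_const hY β
  have hsum : ∫ ω, max (X ω + Y ω - (α + β)) 0 ∂P ≤
      ∫ ω, max (X ω - α) 0 ∂P + ∫ ω, max (Y ω - β) 0 ∂P := by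
    rw [← integral_add hX' hY']
    refine integral_mono (integrable_max_sub_const hXY (α + β)) (hX'.add hY') fun ω => ?_
    rw [add_sub_add_comm]
    simpa using max_add_add_le_max_add_max (a := X ω - α) (b := Y ω - β) (c := 0) (d := 0)
  linarith [mul_le_mul_of_nonneg_left hsum hδ']

end CVaR

/-- `CVaR_δ` is a coherent risk measure on integrable random variables:
monotone, translation invariant, positively homogeneous and subadditive (hence convex). -/
theorem CVaR_is_coherent {Ω : Type*} [MeasurableSpace Ω] (P : Measure Ω)
    [IsProbabilityMeasure P] (δ : ℝ) (hδ : δ ∈ Set.Ioo (0 : ℝ) 1) :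
    (∀ X Y : Ω → ℝ, Integrable X P → Integrable Y P → (∀ᵐ ω ∂P, Y ω ≤ X ω) →
        CVaR P δ Y ≤ CVaR P δ X) ∧
      (∀ (X : Ω → ℝ), Integrable X P → ∀ c : ℝ,
        CVaR P δ (fun ω => X ω + c) = CVaR P δ X + c) ∧
      (∀ (X : Ω → ℝ), Integrable X P → ∀ l : ℝ, 0 ≤ l →
        CVaR P δ (fun ω => l * X ω) = l * CVaR P δ X) ∧
      (∀ X Y : Ω → ℝ, Integrable X P → Integrable Y P →
        CVaR P δ (fun ω => X ω + Y ω) ≤ CVaR P δ X + CVaR P δ Y) ∧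
      (∀ X Y : Ω → ℝ, Integrable X P → Integrable Y P → ∀ l : ℝ, 0 ≤ l → l ≤ 1 →
        CVaR P δ (fun ω => l * X ω + (1 - l) * Y ω) ≤
          l * CVaR P δ X + (1 - l) * CVaR P δ Y) := by
  refine ⟨fun X Y hX hY hYX => CVaR_mono hδ hX hY hYX, fun X hX c => CVaR_add_const hδ hX c,
    fun X _ l hl => CVaR_const_mul hδ X hl, fun X Y hX hY => CVaR_add_le hδ hX hY,
    fun X Y hX hY l hl hl1 => ?_⟩
  rw [← CVaR_const_mul hδ X hl, ← CVaR_const_mul hδ Y (sub_nonneg.2 hl1)]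
  exact CVaR_add_le hδ (hX.const_mul l) (hY.const_mul (1 - l))
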